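/- arXiv:1303.3122 — 2 statements merged into one kernel-verified Lean document; each statement's English description precedes it below -/
import Mathlib

section
/- For every α ∈ (0, 1), the function H_α(t) = h_α(t)/α − h_{α−1}(t)/(α−1), where h_β(t) = (1 + 1/t)^β, is completely monotonic on (0, ∞): H_α has derivatives of all orders on (0,∞) and (-1)^n H_α^(n)(t) ≥ 0 for all t > 0 and all integers n ≥ 0. -/
open Real

/-!
The derivative of `h_β / β` is `-t ^ (-(β + 1)) * (t + 1) ^ (β - 1)`, so the two terms of `H_α`
combine, through `(t + 1) - t = 1`, into
`H_α'(t) = -t ^ (-(α + 1)) * (t + 1) ^ (-(2 - α))`.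
Negative powers are completely monotonic, and by the Leibniz rule so are their products. Hence
`-H_α'` is completely monotonic, and `H_α` is nonnegative because `α - 1 < 0 < α`.
-/

open Set
open scoped ContDiff Pointwise

/-- Complete monotonicity of `f` on `s`: `f` is smooth on `s` and its derivatives alternate in sign,
starting with `0 ≤ f`. Derivatives are taken within `s`, so the notion is meaningful on any set with
unique derivatives, such as an interval with or without its endpoints. -/
def CompletelyMonotoneOn (f : ℝ → ℝ) (s : Set ℝ) : Prop :=
  ContDiffOn ℝ ∞ f s ∧ ∀ n : ℕ, ∀ x ∈ s, 0 ≤ (-1) ^ n * iteratedDerivWithin n f s x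

namespace CompletelyMonotoneOn

variable {f g : ℝ → ℝ} {s t : Set ℝ}

theorem mono (hf : CompletelyMonotoneOn f t) (hst : s ⊆ t) (hs : UniqueDiffOn ℝ s)
    (ht : UniqueDiffOn ℝ t) : CompletelyMonotoneOn f s := by
  refine ⟨hf.1.mono hst, fun n x hx ↦ ?_⟩
  have hft : ContDiffOn ℝ n f t := hf.1.of_le (mod_cast le_top)
  rw [iteratedDerivWithin, iteratedFDerivWithin_subset hst hs ht hft hx]
  exact hf.2 n x (hst hx)

theorem comp_add_const {c : ℝ} (hf : CompletelyMonotoneOn f (c +ᵥ s)) :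
    CompletelyMonotoneOn (fun x ↦ f (x + c)) s := by
  have hmaps : MapsTo (· + c) s (c +ᵥ s) := fun x hx ↦ ⟨x, hx, add_comm c x⟩
  refine ⟨hf.1.comp (by fun_prop) hmaps, fun n x hx ↦ ?_⟩
  rw [iteratedDerivWithin_comp_add_const]
  exact hf.2 n (x + c) (hmaps hx)

theorem mul (hf : CompletelyMonotoneOn f s) (hg : CompletelyMonotoneOn g s)
    (hs : UniqueDiffOn ℝ s) : CompletelyMonotoneOn (f * g) s := by
  refine ⟨hf.1.mul hg.1, fun n x hx ↦ ?_⟩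
  have hfx : ContDiffWithinAt ℝ n f s x := (hf.1 x hx).of_le (mod_cast le_top)
  have hgx : ContDiffWithinAt ℝ n g s x := (hg.1 x hx).of_le (mod_cast le_top)
  rw [iteratedDerivWithin_mul hx hs hfx hgx, Finset.mul_sum]
  refine Finset.sum_nonneg fun i hi ↦ ?_
  have hsign : (-1 : ℝ) ^ n = (-1) ^ i * (-1) ^ (n - i) := by
    rw [← pow_add, Nat.add_sub_cancel' (Finset.mem_range_succ_iff.mp hi)]
  calc (0 : ℝ)
    _ ≤ n.choose i * ((-1) ^ i * iteratedDerivWithin i f s x) *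
          ((-1) ^ (n - i) * iteratedDerivWithin (n - i) g s x) :=
        mul_nonneg (mul_nonneg (Nat.cast_nonneg _) (hf.2 i x hx)) (hg.2 (n - i) x hx)
    _ = (-1) ^ n * (n.choose i * iteratedDerivWithin i f s x *
          iteratedDerivWithin (n - i) g s x) := by
        rw [hsign]; ring

theorem of_hasDerivWithinAt_neg (hs : UniqueDiffOn ℝ s) (hf : ∀ x ∈ s, 0 ≤ f x)
    (hderiv : ∀ x ∈ s, HasDerivWithinAt f (-g x) s x) (hg : CompletelyMonotoneOn g s) :
    CompletelyMonotoneOn f s := by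
  have hderiv_eq : EqOn (derivWithin f s) (-g) s := fun x hx ↦ (hderiv x hx).derivWithin (hs x hx)
  refine ⟨(contDiffOn_infty_iff_derivWithin hs).2
    ⟨fun x hx ↦ (hderiv x hx).differentiableWithinAt, hg.1.neg.congr hderiv_eq⟩, ?_⟩
  rintro (_ | n) x hx
  · simpa using hf x hx
  · rw [iteratedDerivWithin_succ', iteratedDerivWithin_congr hderiv_eq hx,
      iteratedDerivWithin_neg, pow_succ]
    linarith [hg.2 n x hx]

end CompletelyMonotoneOn

theorem ascPochhammer_eval_nonneg {S : Type*} [Semiring S] [PartialOrder S]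
    [IsStrictOrderedRing S] (n : ℕ) {a : S} (ha : 0 ≤ a) : 0 ≤ (ascPochhammer S n).eval a := by
  rcases ha.eq_or_lt with rfl | ha
  · rw [ascPochhammer_eval_zero]
    split_ifs <;> simp
  · exact (ascPochhammer_pos n a ha).le

theorem completelyMonotoneOn_rpow_neg {a : ℝ} (ha : 0 ≤ a) :
    CompletelyMonotoneOn (fun x ↦ x ^ (-a)) (Ioi 0) := by
  refine ⟨fun x hx ↦ (contDiffAt_rpow_const_of_ne (ne_of_gt hx)).contDiffWithinAt,
    fun n x hx ↦ ?_⟩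
  rw [iteratedDerivWithin_of_isOpen_eq_iterate isOpen_Ioi hx, iter_deriv_rpow_const, ← mul_assoc,
    ← ascPochhammer_eval_neg_eq_descPochhammer, neg_neg]
  exact mul_nonneg (ascPochhammer_eval_nonneg n ha) (rpow_nonneg (le_of_lt hx) _)

theorem completelyMonotoneOn_add_const_rpow_neg {a c : ℝ} (ha : 0 ≤ a) (hc : 0 ≤ c) :
    CompletelyMonotoneOn (fun x ↦ (x + c) ^ (-a)) (Ioi 0) := by
  have hsub : c +ᵥ Ioi (0 : ℝ) ⊆ Ioi 0 := by
    rintro _ ⟨x, hx, rfl⟩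
    exact add_pos_of_nonneg_of_pos hc hx
  exact ((completelyMonotoneOn_rpow_neg ha).mono hsub (isOpen_Ioi.vadd c).uniqueDiffOn
    isOpen_Ioi.uniqueDiffOn).comp_add_const

theorem hasDerivAt_one_add_one_div_rpow_div {β t : ℝ} (hβ : β ≠ 0) (ht : 0 < t) :
    HasDerivAt (fun s : ℝ ↦ (1 + 1 / s) ^ β / β) (-(t ^ (-(β + 1)) * (t + 1) ^ (β - 1))) t := by
  have hne : 1 + 1 / t ≠ 0 := by positivity
  have hinner : HasDerivAt (fun s : ℝ ↦ 1 + 1 / s) (-(t ^ 2)⁻¹) t := by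
    simpa using (hasDerivAt_inv ht.ne').const_add 1
  have hpow : t ^ (β + 1) = t ^ (β - 1) * t ^ 2 := by
    rw [← rpow_add_natCast ht.ne']
    push_cast
    ring_nf
  refine ((hinner.rpow_const (Or.inl hne)).div_const β).congr_deriv ?_
  rw [one_add_div ht.ne', div_rpow (by positivity) ht.le, rpow_neg ht.le, hpow]
  field_simp

theorem hasDerivAt_one_add_one_div_rpow_div_sub {α t : ℝ} (hα₀ : α ≠ 0) (hα₁ : α ≠ 1)
    (ht : 0 < t) :
    HasDerivAt (fun s : ℝ ↦ (1 + 1 / s) ^ α / α - (1 + 1 / s) ^ (α - 1) / (α - 1))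
      (-(t ^ (-(α + 1)) * (t + 1) ^ (-(2 - α)))) t := by
  have hfst : (t + 1) ^ (α - 1) = (t + 1) ^ (-(2 - α)) * (t + 1) := by
    rw [← rpow_add_one (by positivity)]
    ring_nf
  have hsnd : t ^ (-(α - 1 + 1)) = t ^ (-(α + 1)) * t := by
    rw [← rpow_add_one ht.ne']
    ring_nf
  refine ((hasDerivAt_one_add_one_div_rpow_div hα₀ ht).sub
    (hasDerivAt_one_add_one_div_rpow_div (sub_ne_zero.mpr hα₁) ht)).congr_deriv ?_
  rw [hfst, hsnd, show α - 1 - 1 = -(2 - α) by ring]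
  ring

theorem one_add_one_div_rpow_div_sub_nonneg {α t : ℝ} (hα : α ∈ Ioo (0 : ℝ) 1) (ht : 0 < t) :
    0 ≤ (1 + 1 / t) ^ α / α - (1 + 1 / t) ^ (α - 1) / (α - 1) := by
  have hfst : 0 ≤ (1 + 1 / t) ^ α / α := div_nonneg (by positivity) hα.1.le
  have hsnd : (1 + 1 / t) ^ (α - 1) / (α - 1) ≤ 0 :=
    div_nonpos_of_nonneg_of_nonpos (by positivity) (sub_nonpos.mpr hα.2.le)
  exact sub_nonneg.mpr (hsnd.trans hfst)

theorem H_alpha_completely_monotonic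
    (α : ℝ) (hα : α ∈ Set.Ioo (0 : ℝ) 1) :
    ContDiffOn ℝ (⊤ : ℕ∞)
        (fun s : ℝ => (1 + 1 / s) ^ α / α - (1 + 1 / s) ^ (α - 1) / (α - 1))
        (Set.Ioi 0) ∧
      ∀ n : ℕ, ∀ t : ℝ, 0 < t →
        0 ≤ (-1 : ℝ) ^ n *
          iteratedDeriv n
            (fun s : ℝ => (1 + 1 / s) ^ α / α - (1 + 1 / s) ^ (α - 1) / (α - 1)) t := by
  have huniq : UniqueDiffOn ℝ (Ioi (0 : ℝ)) := isOpen_Ioi.uniqueDiffOn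
  have hneg_deriv : CompletelyMonotoneOn
      (fun t ↦ t ^ (-(α + 1)) * (t + 1) ^ (-(2 - α))) (Ioi 0) :=
    (completelyMonotoneOn_rpow_neg (by linarith [hα.1])).mul
      (completelyMonotoneOn_add_const_rpow_neg (by linarith [hα.2]) zero_le_one) huniq
  obtain ⟨hsmooth, hsign⟩ := CompletelyMonotoneOn.of_hasDerivWithinAt_neg huniq
    (fun t ht ↦ one_add_one_div_rpow_div_sub_nonneg hα ht)
    (fun t ht ↦
      (hasDerivAt_one_add_one_div_rpow_div_sub hα.1.ne' hα.2.ne ht).hasDerivWithinAt)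
    hneg_deriv
  refine ⟨hsmooth, fun n t ht ↦ ?_⟩
  rw [← iteratedDerivWithin_of_isOpen isOpen_Ioi ht]
  exact hsign n t ht
end

section
/- Let λ ∈ (0, 1) and x > y > 0. Then the difference between the weighted arithmetic and weighted geometric means has the integral representation (λx + (1−λ)y) − x^λ y^{1−λ} = (sin(λπ)/π) · (x−y) · ∫₀^∞ (F(λ, (x−y)s)/s) · e^{−sy} ds, where F(λ,s) = ∫₀¹ (1/u − 1)^λ (1 − λ/(1−u)) e^{−us} du. -/
open Real MeasureTheory

/-- The function `F(λ, s)` from the paper. -/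
noncomputable def paperF (lam s : ℝ) : ℝ :=
  ∫ u in (0 : ℝ)..1, (1 / u - 1) ^ lam * (1 - lam / (1 - u)) * Real.exp (-u * s)

/-!
The gap between the two means is an integral against the Beta kernel `u ^ (-λ) * (1 - u) ^ (λ - 1)`.
Let `m = u * x + (1 - u) * y`. The identity
`(x - y) ^ 2 * (u * (1 - u)) = m * (x + y - m) - x * y`, divided by `m`, is integrated against this
kernel: the mean of the Beta distribution turns `x + y - m` into the arithmetic mean, Feynman's
parametrization turns `x * y / m` into the geometric mean, and Euler's reflection formula gives the
total mass `π / sin (λ * π)`. On the other side, `F (λ, s)` is the Laplace transform of the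
derivative of `u ^ (1 - λ) * (1 - u) ^ λ`, so integration by parts produces a factor `s`, after
which the integral over `s` of `exp (-m * s)` supplies the denominator `m`.
-/

open Set
open ProbabilityTheory (beta)

/-- The density `u ^ (a - 1) * (1 - u) ^ (b - 1)` of the Beta distribution on `(0, 1)` without its
normalizing constant. Unlike `ProbabilityTheory.betaPDFReal` it is not cut off outside `(0, 1)`, so
that `betaKernel (a + 1) (b + 1)` is continuous on `ℝ` for `0 ≤ a, b`. -/
noncomputable def betaKernel (a b u : ℝ) : ℝ :=
  u ^ (a - 1) * (1 - u) ^ (b - 1)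

section BetaKernel

variable {a b u : ℝ}

lemma ofReal_betaKernel (hu : u ∈ Icc 0 1) :
    (betaKernel a b u : ℂ) = (u : ℂ) ^ ((a : ℂ) - 1) * (1 - (u : ℂ)) ^ ((b : ℂ) - 1) := by
  rw [betaKernel, Complex.ofReal_mul, Complex.ofReal_cpow hu.1,
    Complex.ofReal_cpow (sub_nonneg.2 hu.2)]
  push_cast
  rfl

lemma intervalIntegrable_betaKernel (ha : 0 < a) (hb : 0 < b) :
    IntervalIntegrable (betaKernel a b) volume 0 1 := by
  have hcomplex := Complex.betaIntegral_convergent (u := a) (v := b) (by simpa) (by simpa)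
  rw [intervalIntegrable_iff_integrableOn_Ioc_of_le zero_le_one] at hcomplex ⊢
  refine IntegrableOn.congr_fun hcomplex.re (fun u hu ↦ ?_) measurableSet_Ioc
  rw [← ofReal_betaKernel (Ioc_subset_Icc_self hu)]
  exact Complex.ofReal_re _

lemma integral_betaKernel (ha : 0 < a) (hb : 0 < b) :
    ∫ u in (0 : ℝ)..1, betaKernel a b u = beta a b := by
  rw [ProbabilityTheory.beta_eq_betaIntegralReal a b ha hb, Complex.betaIntegral,
    ← intervalIntegral.integral_congr (f := fun u : ℝ ↦ (betaKernel a b u : ℂ))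
      fun u hu ↦ ofReal_betaKernel (by rwa [uIcc_of_le zero_le_one] at hu),
    intervalIntegral.integral_ofReal, Complex.ofReal_re]

lemma betaKernel_add_one_left (hu : u ≠ 0) : betaKernel (a + 1) b u = u * betaKernel a b u := by
  rw [betaKernel, betaKernel, add_sub_right_comm, rpow_add_one hu]
  ring

lemma betaKernel_add_one_right (hu : u ≠ 1) :
    betaKernel a (b + 1) u = (1 - u) * betaKernel a b u := by
  rw [betaKernel, betaKernel, add_sub_right_comm, rpow_add_one (sub_ne_zero.2 hu.symm)]
  ring

lemma continuous_betaKernel_add_one (ha : 0 ≤ a) (hb : 0 ≤ b) :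
    Continuous (betaKernel (a + 1) (b + 1)) := by
  unfold betaKernel
  simp only [add_sub_cancel_right]
  exact (continuous_rpow_const ha).mul
    ((continuous_rpow_const hb).comp (continuous_const.sub continuous_id))

lemma hasDerivAt_betaKernel_add_one (hu : u ∈ Ioo 0 1) :
    HasDerivAt (betaKernel (a + 1) (b + 1)) ((a * (1 - u) - b * u) * betaKernel a b u) u := by
  have hu₀ : u ≠ 0 := hu.1.ne'
  have hu₁ : 1 - u ≠ 0 := (sub_pos.2 hu.2).ne'
  have hleft : HasDerivAt (fun v : ℝ ↦ v ^ a) (a * u ^ (a - 1)) u :=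
    hasDerivAt_rpow_const (.inl hu₀)
  have hright : HasDerivAt (fun v : ℝ ↦ (1 - v) ^ b) (-1 * b * (1 - u) ^ (b - 1)) u :=
    ((hasDerivAt_id u).const_sub 1).rpow_const (.inl hu₁)
  unfold betaKernel
  simp only [add_sub_cancel_right]
  refine (hleft.mul hright).congr_deriv ?_
  rw [rpow_sub_one hu₀, rpow_sub_one hu₁]
  field_simp
  ring

lemma beta_add_one_left (ha : a ≠ 0) (hab : a + b ≠ 0) :
    beta (a + 1) b = a / (a + b) * beta a b := by
  rw [beta, beta, add_right_comm, Gamma_add_one ha, Gamma_add_one hab, mul_assoc,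
    mul_div_mul_comm]

lemma beta_comm (a b : ℝ) : beta a b = beta b a := by
  rw [beta, beta, mul_comm, add_comm]

lemma beta_add_one_right (hb : b ≠ 0) (hab : a + b ≠ 0) :
    beta a (b + 1) = b / (a + b) * beta a b := by
  rw [beta_comm, beta_add_one_left hb (by rwa [add_comm]), beta_comm, add_comm]

lemma beta_one_sub_self (a : ℝ) : beta (1 - a) a = π / sin (π * a) := by
  rw [beta, sub_add_cancel, Gamma_one, div_one, mul_comm, Gamma_mul_Gamma_one_sub]

lemma integral_weightedMean_mul_betaKernel (ha : 0 < a) (hb : 0 < b) (x y : ℝ) :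
    ∫ u in (0 : ℝ)..1, (u * x + (1 - u) * y) * betaKernel a b u =
      (a * x + b * y) / (a + b) * beta a b := by
  have hsplit : ∫ u in (0 : ℝ)..1, (u * x + (1 - u) * y) * betaKernel a b u =
      ∫ u in (0 : ℝ)..1, (x * betaKernel (a + 1) b u + y * betaKernel a (b + 1) u) := by
    refine intervalIntegral.integral_congr_Ioo_of_le zero_le_one fun u hu ↦ ?_
    simp only [betaKernel_add_one_left hu.1.ne', betaKernel_add_one_right hu.2.ne]
    ring
  have ha' : 0 < a + 1 := by positivity
  have hb' : 0 < b + 1 := by positivity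
  have hab : a + b ≠ 0 := (add_pos ha hb).ne'
  rw [hsplit, intervalIntegral.integral_add ((intervalIntegrable_betaKernel ha' hb).const_mul x)
      ((intervalIntegrable_betaKernel ha hb').const_mul y), intervalIntegral.integral_const_mul,
    intervalIntegral.integral_const_mul, integral_betaKernel ha' hb, integral_betaKernel ha hb',
    beta_add_one_left ha.ne' hab, beta_add_one_right hb.ne' hab]
  ring

/-- **Stein's identity** for the Beta distribution. -/
theorem integral_betaKernel_add_one_mul_deriv (ha : 0 < a) (hb : 0 < b) {g g' : ℝ → ℝ}
    (hg : ContinuousOn g (Icc 0 1)) (hgg' : ∀ u ∈ Ioo (0 : ℝ) 1, HasDerivAt g (g' u) u)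
    (hg' : IntervalIntegrable g' volume 0 1) :
    ∫ u in (0 : ℝ)..1, betaKernel (a + 1) (b + 1) u * g' u =
      -∫ u in (0 : ℝ)..1, (a * (1 - u) - b * u) * betaKernel a b u * g u := by
  have hkernel' : IntervalIntegrable (fun u ↦ (a * (1 - u) - b * u) * betaKernel a b u)
      volume 0 1 :=
    (intervalIntegrable_betaKernel ha hb).continuousOn_mul (by fun_prop)
  rw [intervalIntegral.integral_mul_deriv_eq_deriv_mul_of_hasDerivAt
    (continuous_betaKernel_add_one ha.le hb.le).continuousOn (by rwa [uIcc_of_le zero_le_one])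
    (fun u hu ↦ hasDerivAt_betaKernel_add_one (by simpa using hu))
    (fun u hu ↦ hgg' u (by simpa using hu)) hkernel' hg']
  simp [betaKernel, ha.ne', hb.ne']

end BetaKernel

section FeynmanParametrization

variable {a b x y t u : ℝ}

lemma weightedMean_pos (hx : 0 < x) (hy : 0 < y) (hu : u ∈ Icc 0 1) :
    0 < u * x + (1 - u) * y :=
  convex_Ioi (0 : ℝ) hx hy hu.1 (sub_nonneg.2 hu.2) (add_sub_cancel u 1)

/-- The Möbius self-map of `(0, 1)` which multiplies the odds `t / (1 - t)` by `x / y`; it is the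
substitution that evaluates Feynman's parametrization. -/
noncomputable def scaleOdds (x y t : ℝ) : ℝ :=
  t * x / (t * x + (1 - t) * y)

lemma one_sub_scaleOdds (h : t * x + (1 - t) * y ≠ 0) :
    1 - scaleOdds x y t = (1 - t) * y / (t * x + (1 - t) * y) := by
  rw [scaleOdds]
  field_simp
  ring

lemma weightedMean_scaleOdds (h : t * x + (1 - t) * y ≠ 0) :
    scaleOdds x y t * y + (1 - scaleOdds x y t) * x = x * y / (t * x + (1 - t) * y) := by
  rw [one_sub_scaleOdds h, scaleOdds]
  field_simp
  ring

lemma scaleOdds_scaleOdds (hx : x ≠ 0) (hy : y ≠ 0) (h : t * x + (1 - t) * y ≠ 0) :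
    scaleOdds y x (scaleOdds x y t) = t := by
  rw [scaleOdds, weightedMean_scaleOdds h, scaleOdds]
  field_simp

lemma mapsTo_scaleOdds (hx : 0 < x) (hy : 0 < y) :
    MapsTo (scaleOdds x y) (Ioo 0 1) (Ioo 0 1) := fun t ht ↦ by
  have hmean := weightedMean_pos hx hy (Ioo_subset_Icc_self ht)
  refine ⟨div_pos (mul_pos ht.1 hx) hmean, sub_pos.1 ?_⟩
  rw [one_sub_scaleOdds hmean.ne']
  exact div_pos (mul_pos (sub_pos.2 ht.2) hy) hmean

lemma bijOn_scaleOdds (hx : 0 < x) (hy : 0 < y) :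
    BijOn (scaleOdds x y) (Ioo 0 1) (Ioo 0 1) := by
  have hinv {x y : ℝ} (hx : 0 < x) (hy : 0 < y) :
      LeftInvOn (scaleOdds y x) (scaleOdds x y) (Ioo 0 1) := fun t ht ↦
    scaleOdds_scaleOdds hx.ne' hy.ne' (weightedMean_pos hx hy (Ioo_subset_Icc_self ht)).ne'
  exact InvOn.bijOn ⟨hinv hx hy, hinv hy hx⟩ (mapsTo_scaleOdds hx hy) (mapsTo_scaleOdds hy hx)

lemma hasDerivAt_scaleOdds (h : t * x + (1 - t) * y ≠ 0) :
    HasDerivAt (scaleOdds x y) (x * y / (t * x + (1 - t) * y) ^ 2) t := by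
  have hnum : HasDerivAt (fun t : ℝ ↦ t * x) x t := hasDerivAt_mul_const x
  have hden : HasDerivAt (fun t : ℝ ↦ t * x + (1 - t) * y) (x + -1 * y) t :=
    hnum.add (((hasDerivAt_id t).const_sub 1).mul_const y)
  refine (hnum.div hden h).congr_deriv ?_
  congr 1
  ring

lemma betaKernel_scaleOdds (hx : 0 < x) (hy : 0 < y) (ht : t ∈ Ioo 0 1) :
    betaKernel a b (scaleOdds x y t) =
      x ^ (a - 1) * y ^ (b - 1) / (t * x + (1 - t) * y) ^ (a + b - 2) * betaKernel a b t := by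
  have hmean := weightedMean_pos hx hy (Ioo_subset_Icc_self ht)
  have ht' : 0 < 1 - t := sub_pos.2 ht.2
  rw [betaKernel, one_sub_scaleOdds hmean.ne', scaleOdds, div_rpow (mul_pos ht.1 hx).le hmean.le,
    div_rpow (mul_pos ht' hy).le hmean.le, mul_rpow ht.1.le hx.le, mul_rpow ht'.le hy.le,
    show a + b - 2 = a - 1 + (b - 1) by ring, rpow_add hmean, betaKernel]
  ring

/-- **Feynman's parametrization** with real exponents. -/
theorem integral_betaKernel_div_weightedMean_rpow (ha : 0 < a) (hb : 0 < b) (hx : 0 < x)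
    (hy : 0 < y) :
    ∫ u in (0 : ℝ)..1, betaKernel a b u / (u * x + (1 - u) * y) ^ (a + b) =
      beta a b / (x ^ a * y ^ b) := by
  have hsubst := integral_image_eq_integral_abs_deriv_smul measurableSet_Ioo
    (fun t ht ↦ (hasDerivAt_scaleOdds
      (weightedMean_pos hy hx (Ioo_subset_Icc_self ht)).ne').hasDerivWithinAt)
    (bijOn_scaleOdds hy hx).injOn (fun u ↦ betaKernel a b u / (u * x + (1 - u) * y) ^ (a + b))
  rw [(bijOn_scaleOdds hy hx).image_eq] at hsubst
  rw [intervalIntegral.integral_of_le zero_le_one, integral_Ioc_eq_integral_Ioo, hsubst,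
    ← integral_betaKernel ha hb, intervalIntegral.integral_of_le zero_le_one,
    integral_Ioc_eq_integral_Ioo, ← integral_div]
  refine setIntegral_congr_fun measurableSet_Ioo fun t ht ↦ ?_
  have hmean := weightedMean_pos hy hx (Ioo_subset_Icc_self ht)
  simp only [smul_eq_mul]
  rw [abs_of_pos (by positivity), weightedMean_scaleOdds hmean.ne',
    betaKernel_scaleOdds hy hx ht, div_rpow (by positivity) hmean.le, mul_rpow hy.le hx.le,
    rpow_add hx, rpow_add hy, rpow_sub_one hx.ne', rpow_sub_one hy.ne', rpow_sub hmean, rpow_two]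
  generalize t * y + (1 - t) * x = m at hmean ⊢
  field_simp

end FeynmanParametrization

section ArithmeticGeometric

variable {a b x y u : ℝ}

lemma continuousOn_inv_weightedMean (hx : 0 < x) (hy : 0 < y) :
    ContinuousOn (fun u ↦ (u * x + (1 - u) * y)⁻¹) (Icc 0 1) :=
  ContinuousOn.inv₀ (by fun_prop) fun _ hu ↦ (weightedMean_pos hx hy hu).ne'

lemma intervalIntegrable_betaKernel_div_weightedMean (ha : 0 < a) (hb : 0 < b) (hx : 0 < x)
    (hy : 0 < y) :
    IntervalIntegrable (fun u ↦ betaKernel a b u / (u * x + (1 - u) * y)) volume 0 1 := by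
  simp only [div_eq_mul_inv]
  refine (intervalIntegrable_betaKernel ha hb).mul_continuousOn ?_
  rw [uIcc_of_le zero_le_one]
  exact continuousOn_inv_weightedMean hx hy

lemma sq_sub_mul_betaKernel_add_one_div_weightedMean (hx : 0 < x) (hy : 0 < y)
    (hu : u ∈ Ioo 0 1) :
    (x - y) ^ 2 * (betaKernel (a + 1) (b + 1) u / (u * x + (1 - u) * y)) =
      (x + y) * betaKernel a b u - (u * x + (1 - u) * y) * betaKernel a b u
        - x * y * (betaKernel a b u / (u * x + (1 - u) * y)) := by
  have hpos := weightedMean_pos hx hy (Ioo_subset_Icc_self hu)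
  rw [betaKernel_add_one_left hu.1.ne', betaKernel_add_one_right hu.2.ne]
  generalize hm : u * x + (1 - u) * y = m at hpos ⊢
  field_simp
  rw [← hm]
  ring

theorem sq_sub_mul_integral_betaKernel_add_one_div_weightedMean (ha : 0 < a) (hb : 0 < b)
    (hab : a + b = 1) (hx : 0 < x) (hy : 0 < y) :
    (x - y) ^ 2 *
        ∫ u in (0 : ℝ)..1, betaKernel (a + 1) (b + 1) u / (u * x + (1 - u) * y) =
      beta a b * (b * x + a * y - x ^ b * y ^ a) := by
  have hkernel := intervalIntegrable_betaKernel ha hb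
  have hmean : IntervalIntegrable (fun u ↦ (u * x + (1 - u) * y) * betaKernel a b u)
      volume 0 1 := hkernel.continuousOn_mul (by fun_prop)
  have hdiv := intervalIntegrable_betaKernel_div_weightedMean ha hb hx hy
  have hfeynman : ∫ u in (0 : ℝ)..1, betaKernel a b u / (u * x + (1 - u) * y) =
      beta a b / (x ^ a * y ^ b) := by
    simpa only [hab, rpow_one] using integral_betaKernel_div_weightedMean_rpow ha hb hx hy
  calc (x - y) ^ 2 * ∫ u in (0 : ℝ)..1, betaKernel (a + 1) (b + 1) u / (u * x + (1 - u) * y)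
    _ = ∫ u in (0 : ℝ)..1, ((x + y) * betaKernel a b u
          - (u * x + (1 - u) * y) * betaKernel a b u
          - x * y * (betaKernel a b u / (u * x + (1 - u) * y))) := by
      rw [← intervalIntegral.integral_const_mul]
      exact intervalIntegral.integral_congr_Ioo_of_le zero_le_one fun u hu ↦
        sq_sub_mul_betaKernel_add_one_div_weightedMean hx hy hu
    _ = (x + y) * beta a b - (a * x + b * y) * beta a b
          - x * y * (beta a b / (x ^ a * y ^ b)) := by
      rw [intervalIntegral.integral_sub ((hkernel.const_mul _).sub hmean) (hdiv.const_mul _),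
        intervalIntegral.integral_sub (hkernel.const_mul _) hmean,
        intervalIntegral.integral_const_mul, intervalIntegral.integral_const_mul,
        integral_betaKernel ha hb, integral_weightedMean_mul_betaKernel ha hb, hfeynman, hab,
        div_one]
    _ = beta a b * (b * x + a * y - x ^ b * y ^ a) := by
      rw [show b = 1 - a by linarith, rpow_sub hx, rpow_sub hy, rpow_one, rpow_one]
      field_simp
      ring

end ArithmeticGeometric

section LaplaceTransform

theorem integral_Ioi_integral_mul_exp_neg_mul {α : Type*} [MeasurableSpace α] {μ : Measure α}
    [SFinite μ] {f g : α → ℝ} (hg : AEStronglyMeasurable g μ)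
    (hg_pos : ∀ᵐ z ∂μ, 0 < g z) (hfg : Integrable (fun z ↦ f z / g z) μ) :
    ∫ s in Ioi (0 : ℝ), ∫ z, f z * exp (-g z * s) ∂μ = ∫ z, f z / g z ∂μ := by
  have hf : AEStronglyMeasurable f μ := (hfg.aestronglyMeasurable.mul hg).congr <|
    hg_pos.mono fun z hz ↦ div_mul_cancel₀ (f z) hz.ne'
  have hlaplace (c : ℝ) {r : ℝ} (hr : 0 < r) : ∫ s in Ioi (0 : ℝ), c * exp (-r * s) = c / r := by
    rw [integral_const_mul, integral_exp_mul_Ioi (neg_lt_zero.2 hr)]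
    simp [div_eq_mul_inv]
  have hmeas : AEStronglyMeasurable (Function.uncurry fun s z ↦ f z * exp (-g z * s))
      ((volume.restrict (Ioi (0 : ℝ))).prod μ) :=
    hf.comp_snd.mul (continuous_exp.comp_aestronglyMeasurable
      (hg.comp_snd.neg.mul measurable_fst.aestronglyMeasurable))
  have hint : Integrable (Function.uncurry fun s z ↦ f z * exp (-g z * s))
      ((volume.restrict (Ioi (0 : ℝ))).prod μ) := by
    refine (integrable_prod_iff' hmeas).2 ⟨?_, hfg.norm.congr ?_⟩
    · filter_upwards [hg_pos] with z hz
      exact (integrableOn_exp_mul_Ioi (neg_lt_zero.2 hz) 0).const_mul (f z)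
    · filter_upwards [hg_pos] with z hz
      simp only [Function.uncurry_apply_pair, norm_mul, norm_div, norm_of_nonneg (exp_nonneg _),
        norm_of_nonneg hz.le, hlaplace _ hz]
  rw [integral_integral_swap hint]
  refine integral_congr_ae ?_
  filter_upwards [hg_pos] with z hz using hlaplace (f z) hz

end LaplaceTransform

section PaperF

variable {lam x y : ℝ}

lemma paperF_integrand_eq_mul_betaKernel {u : ℝ} (hu : u ∈ Ioo 0 1) :
    (1 / u - 1) ^ lam * (1 - lam / (1 - u)) =
      ((1 - lam) * (1 - u) - lam * u) * betaKernel (1 - lam) lam u := by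
  have hu₀ : 0 < u := hu.1
  have hu₁ : 0 < 1 - u := sub_pos.2 hu.2
  rw [betaKernel, show 1 / u - 1 = (1 - u) / u by field_simp, div_rpow hu₁.le hu₀.le,
    sub_sub_cancel_left, rpow_neg hu₀.le, rpow_sub_one hu₁.ne']
  field_simp
  ring

lemma paperF_eq_mul_integral_betaKernel (hlam : lam ∈ Ioo 0 1) (s : ℝ) :
    paperF lam s =
      s * ∫ u in (0 : ℝ)..1, betaKernel (1 - lam + 1) (lam + 1) u * exp (-u * s) := by
  have hexp (u : ℝ) : HasDerivAt (fun u ↦ exp (-u * s)) (exp (-u * s) * (-1 * s)) u :=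
    ((hasDerivAt_neg u).mul_const s).exp
  have hparts := integral_betaKernel_add_one_mul_deriv (sub_pos.2 hlam.2) hlam.1
    (g := fun u ↦ exp (-u * s)) (by fun_prop) (fun u _ ↦ hexp u)
    (Continuous.intervalIntegrable (by fun_prop) 0 1)
  calc paperF lam s
    _ = ∫ u in (0 : ℝ)..1,
          ((1 - lam) * (1 - u) - lam * u) * betaKernel (1 - lam) lam u * exp (-u * s) := by
      refine intervalIntegral.integral_congr_Ioo_of_le zero_le_one fun u hu ↦ ?_
      simp only [paperF_integrand_eq_mul_betaKernel hu]
    _ = -∫ u in (0 : ℝ)..1,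
          betaKernel (1 - lam + 1) (lam + 1) u * (exp (-u * s) * (-1 * s)) := by
      rw [hparts, neg_neg]
    _ = s * ∫ u in (0 : ℝ)..1, betaKernel (1 - lam + 1) (lam + 1) u * exp (-u * s) := by
      rw [← intervalIntegral.integral_neg, ← intervalIntegral.integral_const_mul]
      congr! 2
      ring

lemma integral_Ioi_paperF_div_mul_exp (hlam : lam ∈ Ioo 0 1) (hx : 0 < x) (hy : 0 < y) :
    ∫ s in Ioi (0 : ℝ), paperF lam ((x - y) * s) / s * exp (-s * y) =
      (x - y) * ∫ u in (0 : ℝ)..1,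
        betaKernel (1 - lam + 1) (lam + 1) u / (u * x + (1 - u) * y) := by
  have hkernel : Continuous (betaKernel (1 - lam + 1) (lam + 1)) :=
    continuous_betaKernel_add_one (sub_pos.2 hlam.2).le hlam.1.le
  have hpos : ∀ᵐ u ∂volume.restrict (Ioc (0 : ℝ) 1), 0 < u * x + (1 - u) * y :=
    ae_restrict_of_forall_mem measurableSet_Ioc fun u hu ↦
      weightedMean_pos hx hy (Ioc_subset_Icc_self hu)
  have hint : IntegrableOn
      (fun u ↦ betaKernel (1 - lam + 1) (lam + 1) u / (u * x + (1 - u) * y)) (Ioc 0 1) := by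
    simp only [div_eq_mul_inv]
    exact (hkernel.continuousOn.mul (continuousOn_inv_weightedMean hx hy)).integrableOn_Icc.mono_set
      Ioc_subset_Icc_self
  have hexp (s : ℝ) (hs : s ∈ Ioi 0) : paperF lam ((x - y) * s) / s * exp (-s * y) =
      (x - y) * ∫ u in Ioc (0 : ℝ) 1, betaKernel (1 - lam + 1) (lam + 1) u *
        exp (-(u * x + (1 - u) * y) * s) := by
    have hs : s ≠ 0 := (mem_Ioi.1 hs).ne'
    rw [paperF_eq_mul_integral_betaKernel hlam, mul_assoc, mul_div_assoc, mul_div_cancel_left₀ _ hs,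
      mul_assoc, ← intervalIntegral.integral_mul_const,
      intervalIntegral.integral_of_le zero_le_one]
    congr! 3
    rw [mul_assoc, ← exp_add]
    ring_nf
  rw [setIntegral_congr_fun measurableSet_Ioi hexp, integral_const_mul,
    integral_Ioi_integral_mul_exp_neg_mul (Continuous.aestronglyMeasurable (by fun_prop)) hpos hint,
    intervalIntegral.integral_of_le zero_le_one]

end PaperF

theorem weighted_AM_GM_integral_representation_general {lam x y : ℝ} (hlam : lam ∈ Ioo (0 : ℝ) 1)
    (hx : 0 < x) (hy : 0 < y) :
    (lam * x + (1 - lam) * y) - x ^ lam * y ^ (1 - lam) =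
      sin (lam * π) / π * (x - y) *
        ∫ s in Ioi (0 : ℝ), paperF lam ((x - y) * s) / s * exp (-s * y) := by
  have hsin : 0 < sin (lam * π) :=
    sin_pos_of_pos_of_lt_pi (mul_pos hlam.1 pi_pos) (mul_lt_of_lt_one_left pi_pos hlam.2)
  have hgap := sq_sub_mul_integral_betaKernel_add_one_div_weightedMean (sub_pos.2 hlam.2) hlam.1
    (sub_add_cancel 1 lam) hx hy
  rw [beta_one_sub_self, mul_comm π] at hgap
  rw [integral_Ioi_paperF_div_mul_exp hlam hx hy, mul_assoc, ← mul_assoc (x - y), ← sq, hgap]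
  field_simp

theorem weighted_AM_GM_integral_representation
    (lam x y : ℝ) (hlam : lam ∈ Set.Ioo (0 : ℝ) 1)
    (hxy : x > y) (hy : 0 < y) :
    (lam * x + (1 - lam) * y) - x ^ lam * y ^ (1 - lam) =
      Real.sin (lam * π) / π * (x - y) *
        ∫ s in Set.Ioi (0 : ℝ),
          paperF lam ((x - y) * s) / s * Real.exp (-s * y) :=
  weighted_AM_GM_integral_representation_general hlam (hy.trans hxy) hy
end
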